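/- For any d ≥ 1, any Lebesgue measurable sets E₁, E₂ ⊂ ℝ^d with finite Lebesgue measures, and any τ > 0, one has ∫_{ℝ^d} min((1_{E₁} * 1_{E₂})(x), τ) dx ≥ ∫_{ℝ^d} min((1_{E₁⋆} * 1_{E₂⋆})(x), τ) dx. -/

import Mathlib

/-!
The theorem is deduced from the Riesz–Sobolev inequality `riesz_sobolev`, applied to `E₁`, `E₂` and
the superlevel set `C = {g > τ}` of `g = 1_{E₁} * 1_{E₂}`. Pointwise `min g τ + 1_C g = g + τ 1_C`,
while for the convolution `g⋆` of the balls and any set `K` one has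
`min g⋆ τ + 1_K g⋆ ≤ g⋆ + τ 1_K`. Integrating, with `K` the ball `C⋆`, the right-hand sides agree,
and `∫_C g ≤ ∫_{C⋆} g⋆` gives the claim.

In dimension one the Riesz–Sobolev inequality (`trip_le_symR`) comes from a cut: with lengths
`a, b, c` and `τ = (a + b - c) / 2`, split off the lower part of `A` and the upper part of `B` of
length `τ`. Pairs in the product of the two remainders contribute at most `(a - τ) (b - τ)`; the
other pairs occupy at most length `τ` on every line `y + z = x`, so contribute at most `τ c`. For
centred intervals the total is attained. If one length exceeds the sum of the other two, the trivial
bound by a product of two lengths is attained by the intervals.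

Applied on line sections this shows that Steiner symmetrization, in any direction of `ℝⁿ⁺¹`, does
not decrease the trilinear form (`trip_le_steiner`). To reach balls no compactness is needed: let
`B i` be the centred balls with the measures of the three sets `F i`. If `F i` misses a part of
`B i` of measure `δ`, then averaging over translations (`exists_translate`) finds a vector `z` that
moves a part of `F i \ B i` of measure at least a constant times `δ²` into `B i \ F i`, and
symmetrization in the direction of `z` increases `|F i ∩ B i|` by that much (`steiner_gain`), while
it never decreases the overlap for the other two sets. Hence the total deficit can be made
arbitrarily small (`exists_adm_small`), and continuity of the trilinear form in measure gives the
inequality for bounded sets; exhaustion by balls gives it for sets of finite measure.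
-/

open MeasureTheory Set

noncomputable section

/-- `ℝ^d` with Lebesgue measure. -/
abbrev Vec (d : ℕ) := EuclideanSpace ℝ (Fin d)

/-- Indicator function of a set, with value `1 : ℝ`. -/
def ind {d : ℕ} (E : Set (Vec d)) : Vec d → ℝ := E.indicator 1

/-- Convolution of two functions on `ℝ^d`. -/
def conv {d : ℕ} (f g : Vec d → ℝ) (x : Vec d) : ℝ := ∫ y, f y * g (x - y)

/-- `E⋆`: the closed ball centered at the origin with the same measure as `E`. -/
def ballStar {d : ℕ} (E : Set (Vec d)) : Set (Vec d) :=
  Metric.closedBall 0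
    (((volume E).toReal / (volume (Metric.closedBall (0 : Vec d) 1)).toReal) ^ ((1 : ℝ) / d))

open scoped ENNReal

/-! ### The trilinear form -/

/-- The trilinear form `∫∫ 1_A(y) 1_B(z) 1_C(y + z) dy dz` of the Riesz–Sobolev inequality,
encoded as the measure of a subset of the product space. -/
def trip {G : Type*} [MeasureSpace G] [Add G] (A B C : Set G) : ℝ≥0∞ :=
  volume {p : G × G | p.1 ∈ A ∧ p.2 ∈ B ∧ p.1 + p.2 ∈ C}

lemma measurableSet_trip {G : Type*} [MeasurableSpace G] [Add G] [MeasurableAdd₂ G] {A B C : Set G}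
    (hA : MeasurableSet A) (hB : MeasurableSet B) (hC : MeasurableSet C) :
    MeasurableSet {p : G × G | p.1 ∈ A ∧ p.2 ∈ B ∧ p.1 + p.2 ∈ C} :=
  (measurable_fst hA).inter ((measurable_snd hB).inter (measurable_add hC))

section Trip

set_option linter.unusedSectionVars false

variable {G : Type*} [MeasureSpace G] [AddCommGroup G] [MeasurableAdd₂ G] [MeasurableNeg G]
  [SFinite (volume : Measure G)] [(volume : Measure G).IsAddLeftInvariant]

lemma trip_mono {A B C A' B' C' : Set G} (hA : A ⊆ A') (hB : B ⊆ B') (hC : C ⊆ C') :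
    trip A B C ≤ trip A' B' C' :=
  measure_mono fun _ hp => ⟨hA hp.1, hB hp.2.1, hC hp.2.2⟩

lemma trip_comm {A B C : Set G} (hA : MeasurableSet A) (hB : MeasurableSet B)
    (hC : MeasurableSet C) : trip A B C = trip B A C := by
  have h := (Measure.measurePreserving_swap (μ := (volume : Measure G))
    (ν := (volume : Measure G))).measure_preimage (measurableSet_trip hA hB hC).nullMeasurableSet
  unfold trip
  rw [Measure.volume_eq_prod, ← h]
  congr 1
  ext p
  simp only [mem_preimage, mem_ofPred_eq, Prod.fst_swap, Prod.snd_swap, add_comm p.2 p.1]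
  tauto

lemma trip_le_left (A B C : Set G) : trip A B C ≤ volume A * volume B := by
  unfold trip
  rw [Measure.volume_eq_prod, ← Measure.prod_prod]
  exact measure_mono fun p hp => ⟨hp.1, hp.2.1⟩

/-- The shear `(y, z) ↦ (y, y + z)` turns subsets of the `(y, z)`-plane into subsets of the
`(y, x)`-plane, `x = y + z`, of equal measure. -/
lemma volume_shear {S : Set (G × G)} (hS : MeasurableSet S) :
    volume {p : G × G | (p.1, p.1 + p.2) ∈ S} = volume S := by
  have := (measurePreserving_prod_add (volume : Measure G) (volume : Measure G)).measure_preimage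
    hS.nullMeasurableSet
  rw [Measure.volume_eq_prod, ← this]; rfl

lemma trip_shear {A B C : Set G} (hA : MeasurableSet A) (hB : MeasurableSet B)
    (hC : MeasurableSet C) :
    trip A B C = volume {p : G × G | p.1 ∈ A ∧ p.2 - p.1 ∈ B ∧ p.2 ∈ C} := by
  rw [← volume_shear]
  · simp [trip]
  · exact (measurable_fst hA).inter
      (((measurable_snd.sub measurable_fst) hB).inter (measurable_snd hC))

lemma trip_le_right {A B C : Set G} (hA : MeasurableSet A) (hB : MeasurableSet B)
    (hC : MeasurableSet C) : trip A B C ≤ volume A * volume C := by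
  rw [trip_shear hA hB hC, Measure.volume_eq_prod, ← Measure.prod_prod]
  exact measure_mono fun p hp => ⟨hp.1, hp.2.2⟩

lemma trip_eq_lintegral {A B C : Set G} (hA : MeasurableSet A) (hB : MeasurableSet B)
    (hC : MeasurableSet C) :
    trip A B C = ∫⁻ x in C, volume {y | y ∈ A ∧ x - y ∈ B} := by
  have hm : MeasurableSet {p : G × G | p.1 ∈ A ∧ p.2 - p.1 ∈ B ∧ p.2 ∈ C} :=
    (measurable_fst hA).inter
      (((measurable_snd.sub measurable_fst) hB).inter (measurable_snd hC))
  rw [trip_shear hA hB hC, Measure.volume_eq_prod, Measure.prod_apply_symm hm,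
    ← lintegral_indicator hC]
  refine lintegral_congr fun x => ?_
  by_cases hx : x ∈ C <;> simp [hx]

end Trip

/-! ### Dimension one -/

lemma exists_cut {A : Set ℝ} {τ : ℝ} (hA : volume A ≠ ⊤)
    (h0 : 0 < τ) (h1 : ENNReal.ofReal τ < volume A) :
    ∃ α, volume (A ∩ Iic α) = ENNReal.ofReal τ := by
  have hfin : IsFiniteMeasure (volume.restrict A) := ⟨by simpa using hA.lt_top⟩
  have hval : ∀ x, (volume.restrict A) (Iic x) = volume (A ∩ Iic x) := fun x => by
    rw [Measure.restrict_apply measurableSet_Iic, inter_comm]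
  have hne : ∀ x, volume (A ∩ Iic x) ≠ ⊤ := fun x => measure_ne_top_of_subset inter_subset_left hA
  have hmono : Monotone fun x => volume (A ∩ Iic x) := fun x y h =>
    measure_mono (inter_subset_inter_right _ (Iic_subset_Iic.2 h))
  have hlip : ∀ x y, x ≤ y → volume (A ∩ Iic y) ≤ volume (A ∩ Iic x) + ENNReal.ofReal (y - x) := by
    intro x y hxy
    rw [← Real.volume_Ioc]
    refine (measure_mono ?_).trans (measure_union_le _ _)
    rintro z ⟨hz, hzy⟩
    rcases le_or_gt z x with h | h
    · exact Or.inl ⟨hz, h⟩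
    · exact Or.inr ⟨h, hzy⟩
  have hcont : Continuous fun x => (volume (A ∩ Iic x)).toReal := by
    refine (LipschitzWith.of_le_add (f := fun x => (volume (A ∩ Iic x)).toReal) fun y x => ?_).continuous
    rcases le_total x y with h | h
    · have := ENNReal.toReal_mono (by simp [hne]) (hlip x y h)
      rw [ENNReal.toReal_add (hne _) (by simp), ENNReal.toReal_ofReal (by linarith)] at this
      rw [Real.dist_eq, abs_of_nonneg (by linarith)]
      exact this
    · have := ENNReal.toReal_mono (hne _) (hmono h)
      have := dist_nonneg (x := y) (y := x)
      simp only at *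
      linarith
  have hbot := tendsto_measure_iInter_atBot (μ := volume.restrict A) (s := fun x : ℝ => Iic x)
    (fun _ => measurableSet_Iic.nullMeasurableSet) (fun _ _ h => Iic_subset_Iic.2 h)
    ⟨0, measure_ne_top _ _⟩
  have hemp : ⋂ x : ℝ, Iic x = ∅ := by
    refine eq_empty_of_forall_notMem fun y hy => ?_
    have := mem_iInter.1 hy (y - 1)
    simp only [mem_Iic] at this
    linarith
  rw [hemp, measure_empty] at hbot
  have htop := tendsto_measure_Iic_atTop (volume.restrict A)
  simp only [Function.comp_def, hval, Measure.restrict_apply_univ] at hbot htop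
  obtain ⟨x, hx⟩ := (hbot.eventually (gt_mem_nhds (ENNReal.ofReal_pos.2 h0))).exists
  obtain ⟨y, hy⟩ := (htop.eventually (lt_mem_nhds h1)).exists
  obtain ⟨α, hα⟩ := mem_range_of_exists_le_of_exists_ge hcont (c := τ)
    ⟨x, ENNReal.toReal_le_of_le_ofReal h0.le hx.le⟩
    ⟨y, (ENNReal.ofReal_le_iff_le_toReal (hne _)).1 hy.le⟩
  exact ⟨α, by rw [← hα, ENNReal.ofReal_toReal (hne _)]⟩

lemma exists_cut' {A : Set ℝ} {τ : ℝ} (hA : volume A ≠ ⊤)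
    (h0 : 0 < τ) (h1 : ENNReal.ofReal τ < volume A) :
    ∃ α, volume (A ∩ Ici α) = ENNReal.ofReal τ := by
  obtain ⟨α, hα⟩ := exists_cut (A := -A) (by simpa using hA) h0 (by simpa using h1)
  refine ⟨-α, ?_⟩
  rw [← hα, ← Measure.measure_neg, Set.inter_neg]
  simp

/-- If `A_lo` is the lower part of `A` and `B_hi` the upper part of `B`, both of measure `τ`, then
removing `(A \ A_lo) × (B \ B_hi)` from `A × B` leaves at most measure `τ` on every line
`y + z = x`: when `α ≤ x - β` every remaining `z` lies in `B_hi`, otherwise every remaining `y`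
lies in `A_lo`. -/
lemma trip_le_cut {A B C : Set ℝ} (hA : MeasurableSet A) (hB : MeasurableSet B)
    (hC : MeasurableSet C) (hA' : volume A ≠ ⊤) (hB' : volume B ≠ ⊤) {τ : ℝ} (h0 : 0 < τ)
    (h1 : ENNReal.ofReal τ < volume A) (h2 : ENNReal.ofReal τ < volume B) :
    trip A B C ≤ ENNReal.ofReal τ * volume C +
      (volume A - ENNReal.ofReal τ) * (volume B - ENNReal.ofReal τ) := by
  obtain ⟨α, hα⟩ := exists_cut hA' h0 h1
  obtain ⟨β, hβ⟩ := exists_cut' hB' h0 h2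
  have e1 : volume (A \ Iic α) = volume A - ENNReal.ofReal τ := by
    rw [← hα]
    exact (ENNReal.sub_eq_of_eq_add_rev (by simp [hα])
      (measure_inter_add_sdiff A measurableSet_Iic).symm).symm
  have e2 : volume (B \ Ici β) = volume B - ENNReal.ofReal τ := by
    rw [← hβ]
    exact (ENNReal.sub_eq_of_eq_add_rev (by simp [hβ])
      (measure_inter_add_sdiff B measurableSet_Ici).symm).symm
  set S : Set (ℝ × ℝ) := {p | p.1 ∈ A ∧ p.2 - p.1 ∈ B ∧ p.2 ∈ C ∧ (p.1 ≤ α ∨ β ≤ p.2 - p.1)} with hS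
  have hSm : MeasurableSet S := by
    refine (measurable_fst hA).inter (((measurable_snd.sub measurable_fst) hB).inter
      ((measurable_snd hC).inter (MeasurableSet.union ?_ ?_)))
    · exact measurable_fst measurableSet_Iic
    · exact (measurable_snd.sub measurable_fst) measurableSet_Ici
  have hvS : volume S ≤ ENNReal.ofReal τ * volume C := by
    rw [Measure.volume_eq_prod, Measure.prod_apply_symm hSm, ← setLIntegral_const,
      ← lintegral_indicator hC]
    refine lintegral_mono fun x => ?_
    by_cases hx : x ∈ C
    · simp only [hx, indicator_of_mem]
      rcases le_total α (x - β) with h | h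
      · rw [← hβ, ← ((volume : Measure ℝ).measurePreserving_sub_left x).measure_preimage
          (hB.inter measurableSet_Ici).nullMeasurableSet]
        refine measure_mono ?_
        rintro y ⟨-, hy1, -, hy2⟩
        simp only at hy1 hy2
        refine ⟨hy1, ?_⟩
        simp only [mem_Ici]
        rcases hy2 with hy2 | hy2 <;> linarith
      · rw [← hα]
        refine measure_mono ?_
        rintro y ⟨hy1, -, -, hy2⟩
        simp only at hy1 hy2
        refine ⟨hy1, ?_⟩
        simp only [mem_Iic]
        rcases hy2 with hy2 | hy2 <;> linarith
    · simp [hx, hS]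
  rw [← volume_shear hSm] at hvS
  refine le_trans (measure_mono (t := {p : ℝ × ℝ | (p.1, p.1 + p.2) ∈ S} ∪
    (A \ Iic α) ×ˢ (B \ Ici β)) ?_) ?_
  · rintro ⟨y, z⟩ ⟨h1, h2, h3⟩
    simp only at h1 h2 h3
    by_cases hy : y ≤ α
    · left; simp [hS, h1, h2, h3, hy]
    by_cases hz : β ≤ z
    · left; simp [hS, h1, h2, h3, hz]
    · right; exact ⟨⟨h1, hy⟩, h2, hz⟩
  · refine (measure_union_le _ _).trans (add_le_add hvS ?_)
    rw [Measure.volume_eq_prod, Measure.prod_prod, e1, e2]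


/-- The open centred interval of the same length as `A` (all of `ℝ` if `volume A = ⊤`). -/
def symR (A : Set ℝ) : Set ℝ := {s | ENNReal.ofReal (2 * |s|) < volume A}

lemma symR_eq {A : Set ℝ} (hA : volume A ≠ ⊤) :
    symR A = Ioo (-((volume A).toReal / 2)) ((volume A).toReal / 2) := by
  ext s
  simp only [symR, mem_ofPred_eq, ← abs_lt, mem_Ioo]
  rw [ENNReal.ofReal_lt_iff_lt_toReal (by positivity) hA]
  constructor <;> intro h <;> linarith

lemma volume_symR {A : Set ℝ} (hA : volume A ≠ ⊤) : volume (symR A) = volume A := by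
  rw [symR_eq hA, Real.volume_Ioo]
  ring_nf
  exact ENNReal.ofReal_toReal hA

lemma volume_triangle_le (a b τ : ℝ) (hτ : 0 ≤ τ) :
    volume {p : ℝ × ℝ | p.1 < a ∧ p.2 < b ∧ a + b - τ ≤ p.1 + p.2} ≤ ENNReal.ofReal (τ ^ 2 / 2) := by
  have hm : MeasurableSet {p : ℝ × ℝ | p.1 < a ∧ p.2 < b ∧ a + b - τ ≤ p.1 + p.2} :=
    (measurableSet_lt measurable_fst measurable_const).inter
      ((measurableSet_lt measurable_snd measurable_const).inter
        (measurableSet_le measurable_const (measurable_fst.add measurable_snd)))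
  have hI : ∫ y in Ioc (a - τ) a, (y - (a - τ)) = τ ^ 2 / 2 := by
    rw [← intervalIntegral.integral_of_le (by linarith), intervalIntegral.integral_sub (by simp) (by simp)]
    simp
    ring
  rw [Measure.volume_eq_prod, Measure.prod_apply hm, ← hI, ofReal_integral_eq_lintegral_ofReal
    (ContinuousOn.integrableOn_Icc (by fun_prop) |>.mono_set Ioc_subset_Icc_self)
    ((ae_restrict_iff' measurableSet_Ioc).2 (Filter.Eventually.of_forall fun y hy => by
      simp only [mem_Ioc] at hy; simp only [Pi.zero_apply]; linarith)),
    ← lintegral_indicator measurableSet_Ioc]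
  refine lintegral_mono fun y => ?_
  by_cases hy : y ∈ Ioc (a - τ) a
  · rw [indicator_of_mem hy]
    refine (measure_mono (t := Ico (a + b - τ - y) b) ?_).trans_eq ?_
    · rintro z ⟨-, h1, h2⟩
      simp only at h1 h2
      exact ⟨by linarith, h1⟩
    · rw [Real.volume_Ico]; congr 1; ring
  · rw [indicator_of_notMem hy]
    refine le_of_eq ?_
    rw [show Prod.mk y ⁻¹' {p : ℝ × ℝ | p.1 < a ∧ p.2 < b ∧ a + b - τ ≤ p.1 + p.2} = ∅ from ?_, measure_empty]
    refine eq_empty_of_forall_notMem ?_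
    rintro z ⟨h0, h1, h2⟩
    simp only at h0 h1 h2
    exact hy ⟨by linarith, h0.le⟩

/-- Two corner triangles of legs `τ = (a + b - c) / 2` are all that the constraint `y + z ∈ C`
removes from the product of two centred intervals. -/
lemma mul_le_trip_Ioo {a b c τ : ℝ} (h : 2 * τ = a + b - c) (hτ : 0 ≤ τ) :
    volume (Ioo (-(a / 2)) (a / 2)) * volume (Ioo (-(b / 2)) (b / 2)) ≤
      trip (Ioo (-(a / 2)) (a / 2)) (Ioo (-(b / 2)) (b / 2)) (Ioo (-(c / 2)) (c / 2)) +
        ENNReal.ofReal (τ ^ 2) := by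
  have h1 := volume_triangle_le (a / 2) (b / 2) τ hτ
  have h2 : volume (-{p : ℝ × ℝ | p.1 < a / 2 ∧ p.2 < b / 2 ∧ a / 2 + b / 2 - τ ≤ p.1 + p.2})
    ≤ ENNReal.ofReal (τ ^ 2 / 2) := by
    rw [Measure.measure_neg]; exact h1
  rw [← Measure.prod_prod, ← Measure.volume_eq_prod,
    show τ ^ 2 = τ ^ 2 / 2 + τ ^ 2 / 2 by ring, ENNReal.ofReal_add (by positivity) (by positivity)]
  refine le_trans ?_ (add_le_add_right (add_le_add h1 h2) _)
  refine le_trans ?_ (add_le_add_right (measure_union_le _ _) _)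
  refine le_trans (measure_mono ?_) (measure_union_le _ _)
  rintro ⟨y, z⟩ ⟨⟨h3, h4⟩, h5, h6⟩
  simp only at h3 h4 h5 h6
  by_cases h7 : c / 2 ≤ y + z
  · refine Or.inr (Or.inl ⟨h4, h6, ?_⟩)
    simp only
    linarith
  by_cases h8 : y + z ≤ -(c / 2)
  · refine Or.inr (Or.inr ⟨?_, ?_, ?_⟩) <;> simp only [Prod.fst_neg, Prod.snd_neg] <;> linarith
  · push Not at h7 h8
    exact Or.inl ⟨⟨h3, h4⟩, ⟨h5, h6⟩, h8, h7⟩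

lemma trip_Ioo_of_add_le {a b c : ℝ} (h : a + b ≤ c) :
    volume (Ioo (-(a / 2)) (a / 2)) * volume (Ioo (-(b / 2)) (b / 2)) ≤
      trip (Ioo (-(a / 2)) (a / 2)) (Ioo (-(b / 2)) (b / 2)) (Ioo (-(c / 2)) (c / 2)) := by
  rw [← Measure.prod_prod, ← Measure.volume_eq_prod]
  refine measure_mono ?_
  rintro ⟨y, z⟩ ⟨⟨h3, h4⟩, h5, h6⟩
  simp only at h3 h4 h5 h6
  exact ⟨⟨h3, h4⟩, ⟨h5, h6⟩, by simp only; linarith, by simp only; linarith⟩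

lemma trip_Ioo_of_le_sub {a b c : ℝ} (h : a + c ≤ b) :
    volume (Ioo (-(a / 2)) (a / 2)) * volume (Ioo (-(c / 2)) (c / 2)) ≤
      trip (Ioo (-(a / 2)) (a / 2)) (Ioo (-(b / 2)) (b / 2)) (Ioo (-(c / 2)) (c / 2)) := by
  rw [trip_shear measurableSet_Ioo measurableSet_Ioo measurableSet_Ioo,
    ← Measure.prod_prod, ← Measure.volume_eq_prod]
  refine measure_mono ?_
  rintro ⟨y, z⟩ ⟨⟨h3, h4⟩, h5, h6⟩
  simp only at h3 h4 h5 h6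
  exact ⟨⟨h3, h4⟩, ⟨by simp only; linarith, by simp only; linarith⟩, h5, h6⟩

/-- The one-dimensional Riesz inequality for sets. -/
lemma trip_le_symR {A B C : Set ℝ} (hA : MeasurableSet A) (hB : MeasurableSet B)
    (hC : MeasurableSet C) (hA' : volume A ≠ ⊤) (hB' : volume B ≠ ⊤) (hC' : volume C ≠ ⊤) :
    trip A B C ≤ trip (symR A) (symR B) (symR C) := by
  have vA := volume_symR hA'
  have vB := volume_symR hB'
  have vC := volume_symR hC'
  have eA := (ENNReal.ofReal_toReal hA').symm
  have eB := (ENNReal.ofReal_toReal hB').symm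
  have eC := (ENNReal.ofReal_toReal hC').symm
  rw [symR_eq hA'] at vA ⊢
  rw [symR_eq hB'] at vB ⊢
  rw [symR_eq hC'] at vC ⊢
  have a0 : 0 ≤ (volume A).toReal := ENNReal.toReal_nonneg
  have b0 : 0 ≤ (volume B).toReal := ENNReal.toReal_nonneg
  have c0 : 0 ≤ (volume C).toReal := ENNReal.toReal_nonneg
  set a := (volume A).toReal
  set b := (volume B).toReal
  set c := (volume C).toReal
  rcases le_or_gt (a + b) c with h | h
  · have := trip_Ioo_of_add_le h
    rw [vA, vB] at this
    exact (trip_le_left A B C).trans this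
  rcases le_or_gt (a + c) b with h' | h'
  · have := trip_Ioo_of_le_sub h'
    rw [vA, vC] at this
    exact (trip_le_right hA hB hC).trans this
  rcases le_or_gt (b + c) a with h'' | h''
  · have := trip_Ioo_of_le_sub h''
    rw [vB, vC] at this
    rw [trip_comm hA hB hC, trip_comm measurableSet_Ioo measurableSet_Ioo measurableSet_Ioo]
    exact (trip_le_right hB hA hC).trans this
  obtain ⟨τ, hτ⟩ : ∃ τ, 2 * τ = a + b - c := ⟨(a + b - c) / 2, by ring⟩
  have hτ0 : 0 < τ := by linarith
  have hcut := trip_le_cut hA hB hC hA' hB' hτ0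
    (by rw [eA]; exact (ENNReal.ofReal_lt_ofReal_iff_of_nonneg hτ0.le).2 (by linarith))
    (by rw [eB]; exact (ENNReal.ofReal_lt_ofReal_iff_of_nonneg hτ0.le).2 (by linarith))
  have hlow := mul_le_trip_Ioo hτ hτ0.le
  rw [vA, vB] at hlow
  rw [eA, eB] at hlow
  rw [eA, eB, eC] at hcut
  rw [← ENNReal.ofReal_sub _ hτ0.le, ← ENNReal.ofReal_sub _ hτ0.le,
    ← ENNReal.ofReal_mul hτ0.le, ← ENNReal.ofReal_mul (by linarith),
    ← ENNReal.ofReal_add (by positivity) (mul_nonneg (by linarith) (by linarith))] at hcut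
  refine hcut.trans ?_
  refine (ENNReal.add_le_add_iff_right (ENNReal.ofReal_ne_top (r := τ ^ 2))).1 ?_
  refine le_trans (le_of_eq ?_) hlow
  rw [← ENNReal.ofReal_add (add_nonneg (by positivity) (mul_nonneg (by linarith) (by linarith)))
    (by positivity), ← ENNReal.ofReal_mul a0]
  congr 1
  have : c = a + b - 2 * τ := by linarith
  rw [this]; ring


/-! ### Steiner symmetrization -/

section Steiner

variable {n : ℕ}

/-- The line section of `E ⊆ ℝ × ℝⁿ` over `w`. -/
def fib (E : Set (ℝ × Vec n)) (w : Vec n) : Set ℝ := {s | (s, w) ∈ E}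

/-- Steiner symmetrization in the direction of the first factor: each line section is replaced
by the open centred interval of the same length. -/
def steiner (E : Set (ℝ × Vec n)) : Set (ℝ × Vec n) := {p | p.1 ∈ symR (fib E p.2)}

lemma measurableSet_fib {E : Set (ℝ × Vec n)} (hE : MeasurableSet E) (w : Vec n) :
    MeasurableSet (fib E w) := (measurable_prodMk_right (y := w)) hE

lemma volume_eq_lintegral_fib {E : Set (ℝ × Vec n)} (hE : MeasurableSet E) :
    volume E = ∫⁻ w, volume (fib E w) := by
  rw [Measure.volume_eq_prod, Measure.prod_apply_symm hE]; rfl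

lemma measurable_volume_fib {E : Set (ℝ × Vec n)} (hE : MeasurableSet E) :
    Measurable fun w => volume (fib E w) :=
  measurable_measure_prodMk_right hE

lemma measurableSet_steiner {E : Set (ℝ × Vec n)} (hE : MeasurableSet E) :
    MeasurableSet (steiner E) := by
  refine measurableSet_lt (f := fun p : ℝ × Vec n => ENNReal.ofReal (2 * |p.1|))
    (g := fun p : ℝ × Vec n => volume (fib E p.2)) (by fun_prop) ?_
  exact (measurable_volume_fib hE).comp measurable_snd

lemma volume_steiner {E : Set (ℝ × Vec n)} (hE : MeasurableSet E)
    (hfin : ∀ w, volume (fib E w) ≠ ⊤) : volume (steiner E) = volume E := by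
  rw [volume_eq_lintegral_fib hE, volume_eq_lintegral_fib (measurableSet_steiner hE)]
  exact lintegral_congr fun w => volume_symR (hfin w)

lemma trip_fiber {A B C : Set (ℝ × Vec n)} (hA : MeasurableSet A) (hB : MeasurableSet B)
    (hC : MeasurableSet C) :
    trip A B C = ∫⁻ w, ∫⁻ w', trip (fib A w) (fib B w') (fib C (w + w')) := by
  have hS := measurableSet_trip hA hB hC
  set S := {p : (ℝ × Vec n) × (ℝ × Vec n) | p.1 ∈ A ∧ p.2 ∈ B ∧ p.1 + p.2 ∈ C} with hSdef
  have hF : Measurable (S.indicator (fun _ => (1 : ℝ≥0∞))) := measurable_one.indicator hS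
  have h1 : trip A B C = ∫⁻ p : ℝ × Vec n, ∫⁻ q : ℝ × Vec n, S.indicator (fun _ => (1 : ℝ≥0∞)) (p, q) := by
    rw [← lintegral_prod _ hF.aemeasurable, ← Measure.volume_eq_prod]
    exact (lintegral_indicator_one hS).symm
  have h2 : Measurable fun p : ℝ × Vec n => ∫⁻ q : ℝ × Vec n, S.indicator (fun _ => (1 : ℝ≥0∞)) (p, q) :=
    hF.lintegral_prod_right'
  rw [h1]
  refine (lintegral_prod_symm' (μ := (volume : Measure ℝ)) (ν := (volume : Measure (Vec n)))
    _ h2).trans ?_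
  refine lintegral_congr fun w => ?_
  have h3 : ∀ s : ℝ, ∫⁻ q : ℝ × Vec n, S.indicator (fun _ => (1 : ℝ≥0∞)) ((s, w), q) =
      ∫⁻ w', ∫⁻ s' : ℝ, S.indicator (fun _ => (1 : ℝ≥0∞)) ((s, w), (s', w')) := fun s => by
    exact lintegral_prod_symm' (μ := (volume : Measure ℝ)) (ν := (volume : Measure (Vec n)))
      _ (hF.comp (measurable_prodMk_left (x := (s, w))))
  simp_rw [h3]
  rw [lintegral_lintegral_swap]
  · refine lintegral_congr fun w' => ?_
    have hm := measurableSet_trip (measurableSet_fib hA w) (measurableSet_fib hB w')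
      (measurableSet_fib hC (w + w'))
    unfold trip
    rw [← lintegral_indicator_one hm, Measure.volume_eq_prod, lintegral_prod _
      (measurable_one.indicator hm).aemeasurable]
    rfl
  · refine Measurable.aemeasurable ?_
    have : Measurable fun z : (ℝ × Vec n) × ℝ =>
        S.indicator (fun _ => (1 : ℝ≥0∞)) ((z.1.1, w), (z.2, z.1.2)) := hF.comp (by fun_prop)
    exact this.lintegral_prod_right'

lemma trip_le_steiner {A B C : Set (ℝ × Vec n)} (hA : MeasurableSet A) (hB : MeasurableSet B)
    (hC : MeasurableSet C) (hA' : ∀ w, volume (fib A w) ≠ ⊤) (hB' : ∀ w, volume (fib B w) ≠ ⊤)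
    (hC' : ∀ w, volume (fib C w) ≠ ⊤) :
    trip A B C ≤ trip (steiner A) (steiner B) (steiner C) := by
  rw [trip_fiber hA hB hC, trip_fiber (measurableSet_steiner hA) (measurableSet_steiner hB)
    (measurableSet_steiner hC)]
  exact lintegral_mono fun w => lintegral_mono fun w' =>
    trip_le_symR (measurableSet_fib hA _) (measurableSet_fib hB _) (measurableSet_fib hC _)
      (hA' _) (hB' _) (hC' _)

/-- The closed Euclidean ball of radius `r` in `ℝ × ℝⁿ` (the product norm is the sup norm, so
this is not `Metric.closedBall`); it is meant for `0 ≤ r`. -/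
def prodBall (n : ℕ) (r : ℝ) : Set (ℝ × Vec n) := {p | p.1 ^ 2 + ‖p.2‖ ^ 2 ≤ r ^ 2}

lemma measurableSet_prodBall (r : ℝ) : MeasurableSet (prodBall n r) :=
  measurableSet_le (by fun_prop) measurable_const

lemma volume_fib_lt_top {E : Set (ℝ × Vec n)} {R : ℝ} (h : E ⊆ prodBall n R) (w : Vec n) :
    volume (fib E w) ≠ ⊤ := by
  refine measure_ne_top_of_subset (s := Icc (-|R|) |R|) ?_ (measure_Icc_lt_top (μ := volume)).ne
  intro s hs
  have h1 : s ^ 2 + ‖w‖ ^ 2 ≤ R ^ 2 := h hs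
  exact abs_le.1 (sq_le_sq.1 (by nlinarith [sq_nonneg ‖w‖]))

lemma steiner_subset_prodBall {E : Set (ℝ × Vec n)} {R : ℝ} (h : E ⊆ prodBall n R) :
    steiner E ⊆ prodBall n R := by
  rintro ⟨s, w⟩ hs
  by_contra hcon
  have hs' : ENNReal.ofReal (2 * |s|) < volume (fib E w) := hs
  refine absurd hs' (not_lt.2 ?_)
  refine (measure_mono (t := Icc (-|s|) |s|) ?_).trans_eq (by rw [Real.volume_Icc]; congr 1; ring)
  intro t ht
  have h1 : t ^ 2 + ‖w‖ ^ 2 ≤ R ^ 2 := h ht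
  have h2 : ¬ (s ^ 2 + ‖w‖ ^ 2 ≤ R ^ 2) := hcon
  exact abs_le.1 (sq_le_sq.1 (by linarith))

/-- Symmetrization in the first coordinate increases the overlap with a centred ball by at least
the measure of the part of `E` outside the ball which translation by `(t, 0)` moves into the part of
the ball not covered by `E`. -/
lemma steiner_gain {E : Set (ℝ × Vec n)} (hE : MeasurableSet E)
    (hfin : ∀ w, volume (fib E w) ≠ ⊤) (r t : ℝ) :
    volume (E ∩ prodBall n r) +
      volume {p : ℝ × Vec n | p ∈ E \ prodBall n r ∧ (p.1 + t, p.2) ∈ prodBall n r \ E} ≤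
      volume (steiner E ∩ prodBall n r) := by
  set B := prodBall n r with hB
  have hBm : MeasurableSet B := measurableSet_prodBall r
  have hDm : MeasurableSet {p : ℝ × Vec n | p ∈ E \ B ∧ (p.1 + t, p.2) ∈ B \ E} := by
    refine (hE.diff hBm).inter ?_
    exact (show Measurable fun p : ℝ × Vec n => (p.1 + t, p.2) by fun_prop) (hBm.diff hE)
  rw [volume_eq_lintegral_fib (hE.inter hBm), volume_eq_lintegral_fib hDm,
    volume_eq_lintegral_fib ((measurableSet_steiner hE).inter hBm),
    ← lintegral_add_left (measurable_volume_fib (hE.inter hBm))]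
  refine lintegral_mono fun w => ?_
  set D := fib {p : ℝ × Vec n | p ∈ E \ B ∧ (p.1 + t, p.2) ∈ B \ E} w with hD
  have hDw := measurableSet_fib hDm w
  have hEw := measurableSet_fib hE w
  have hBw := measurableSet_fib hBm w
  have hI : fib (E ∩ B) w = fib E w ∩ fib B w := rfl
  have h1 : volume (fib (E ∩ B) w) + volume D ≤ volume (fib E w) := by
    rw [← measure_inter_add_sdiff (fib E w) hBw, hI]
    exact add_le_add_right (measure_mono fun s hs => hs.1) _
  have h2 : volume (fib (E ∩ B) w) + volume D ≤ volume (fib B w) := by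
    rw [← measure_inter_add_sdiff (fib B w) hEw, hI, inter_comm]
    refine add_le_add_right ?_ _
    rw [← measure_preimage_add_right volume t (fib B w \ fib E w)]
    exact measure_mono fun s hs => hs.2
  -- The two centred sections `steiner E` and `B` are nested.
  by_cases hsub : fib B w ⊆ fib (steiner E) w
  · refine h2.trans (measure_mono fun s hs => ⟨hsub hs, hs⟩)
  · obtain ⟨s, hsB, hsE⟩ := not_subset.1 hsub
    have hsE' : volume (fib E w) ≤ ENNReal.ofReal (2 * |s|) := not_lt.1 hsE
    rw [← volume_symR (hfin w)] at h1
    refine h1.trans (measure_mono fun s' hs' => ⟨hs', ?_⟩)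
    have h3 : ENNReal.ofReal (2 * |s'|) < volume (fib E w) := hs'
    have h4 := (ENNReal.ofReal_lt_ofReal_iff_of_nonneg (by positivity)).1 (h3.trans_le hsE')
    have h5 : s ^ 2 + ‖w‖ ^ 2 ≤ r ^ 2 := hsB
    have h6 : s' ^ 2 ≤ s ^ 2 := sq_le_sq.2 (by linarith)
    change s' ^ 2 + ‖w‖ ^ 2 ≤ r ^ 2
    linarith

end Steiner


/-! ### Symmetrization in an arbitrary direction of Euclidean space -/

/-- Orthonormal coordinates of `ℝⁿ⁺¹` whose first axis contains a prescribed vector `z`. -/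
lemma exists_frame {n : ℕ} (z : Vec (n + 1)) :
    ∃ Φ : ℝ × Vec n ≃ᵐ Vec (n + 1), MeasurePreserving Φ ∧ (∀ p q, Φ (p + q) = Φ p + Φ q) ∧
      (∀ p, ‖Φ p‖ ^ 2 = p.1 ^ 2 + ‖p.2‖ ^ 2) ∧ ∃ t : ℝ, Φ (t, 0) = z := by
  obtain ⟨u, hu, t, htu⟩ : ∃ u : Vec (n + 1), ‖u‖ = 1 ∧ ∃ t : ℝ, t • u = z := by
    by_cases hz : z = 0
    · exact ⟨EuclideanSpace.single 0 1, by simp, 0, by simp [hz]⟩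
    · have : ‖z‖ ≠ 0 := norm_ne_zero_iff.2 hz
      exact ⟨‖z‖⁻¹ • z, by simp [norm_smul, this], ‖z‖, by simp [smul_smul, this]⟩
  obtain ⟨b, hb⟩ := Orthonormal.exists_orthonormalBasis_extension_of_card_eq (𝕜 := ℝ)
    (ι := Fin (n + 1)) (E := Vec (n + 1)) (by simp) (v := fun _ => u) (s := {0}) (by
      refine ⟨fun i => by simpa using hu, fun i j hij => ?_⟩
      exact absurd (Subsingleton.elim i j) hij)
  have hb0 : b 0 = u := hb 0 rfl
  let Φ : ℝ × Vec n ≃ᵐ Vec (n + 1) :=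
    (((MeasurableEquiv.refl ℝ).prodCongr (MeasurableEquiv.toLp 2 (Fin n → ℝ)).symm).trans
      (MeasurableEquiv.piFinSuccAbove (fun _ : Fin (n + 1) => ℝ) 0).symm).trans
      ((MeasurableEquiv.toLp 2 (Fin (n + 1) → ℝ)).trans b.repr.symm.toMeasurableEquiv)
  have hΦ : ∀ p : ℝ × Vec n, Φ p = b.repr.symm (WithLp.toLp 2 (Fin.cons p.1 p.2.ofLp)) := by
    intro p
    simp only [Φ, MeasurableEquiv.trans_apply]
    simp
    rfl
  refine ⟨Φ, ?_, ?_, ?_, t, ?_⟩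
  · refine MeasurePreserving.trans (MeasurePreserving.trans ?_
      (volume_preserving_piFinSuccAbove (fun _ : Fin (n + 1) => ℝ) 0).symm)
      (MeasurePreserving.trans ?_ b.measurePreserving_repr_symm)
    · exact (MeasurePreserving.id _).prod (PiLp.volume_preserving_ofLp (Fin n))
    · exact PiLp.volume_preserving_toLp (Fin (n + 1))
  · intro p q
    rw [hΦ, hΦ, hΦ, ← map_add]
    congr 1
    ext i
    refine Fin.cases ?_ (fun j => ?_) i <;> simp
  · intro p
    rw [hΦ, LinearIsometryEquiv.norm_map, EuclideanSpace.norm_sq_eq, EuclideanSpace.norm_sq_eq,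
      Fin.sum_univ_succ]
    simp
  · rw [hΦ, ← htu, ← hb0, ← b.repr_symm_single, ← map_smul]
    congr 1
    ext i
    refine Fin.cases ?_ (fun j => ?_) i <;> simp

/-- The properties of Steiner symmetrization in the direction of `z` used below. -/
lemma exists_symmetrization {n : ℕ} {R : ℝ} (hR : 0 ≤ R) (z : Vec (n + 1)) :
    ∃ σ : Set (Vec (n + 1)) → Set (Vec (n + 1)),
      (∀ E, MeasurableSet E → E ⊆ Metric.closedBall 0 R →
        MeasurableSet (σ E) ∧ σ E ⊆ Metric.closedBall 0 R ∧ volume (σ E) = volume E ∧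
        ∀ r, 0 ≤ r → volume (E ∩ Metric.closedBall 0 r) +
          volume {p | p ∈ E \ Metric.closedBall 0 r ∧ p + z ∈ Metric.closedBall 0 r \ E} ≤
          volume (σ E ∩ Metric.closedBall 0 r)) ∧
      ∀ A B C, MeasurableSet A → MeasurableSet B → MeasurableSet C →
        A ⊆ Metric.closedBall 0 R → B ⊆ Metric.closedBall 0 R → C ⊆ Metric.closedBall 0 R →
        trip A B C ≤ trip (σ A) (σ B) (σ C) := by
  obtain ⟨Φ, hΦ, hadd, hnorm, t, ht⟩ := exists_frame z
  have hball : ∀ r, 0 ≤ r → Φ ⁻¹' (Metric.closedBall 0 r) = prodBall n r := by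
    intro r hr
    ext p
    simp only [mem_preimage, mem_closedBall_zero_iff, prodBall, mem_ofPred_eq, ← hnorm]
    exact (pow_le_pow_iff_left₀ (norm_nonneg _) hr two_ne_zero).symm
  have hvol : ∀ E, MeasurableSet E → volume (Φ ⁻¹' E) = volume E := fun E hE =>
    hΦ.measure_preimage hE.nullMeasurableSet
  have htrip : ∀ A B C, MeasurableSet A → MeasurableSet B → MeasurableSet C →
      trip (Φ ⁻¹' A) (Φ ⁻¹' B) (Φ ⁻¹' C) = trip A B C := by
    intro A B C hA hB hC
    have := (hΦ.prod hΦ).measure_preimage (measurableSet_trip hA hB hC).nullMeasurableSet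
    refine Eq.trans ?_ this
    unfold trip
    congr 1
    ext p
    simp [hadd]
  have hpre : ∀ E, Φ ⁻¹' (Φ.symm ⁻¹' E) = E := fun E => by ext; simp
  have hsub : ∀ E, E ⊆ Metric.closedBall 0 R → Φ ⁻¹' E ⊆ prodBall n R := fun E h => by
    rw [← hball R hR]; exact preimage_mono h
  refine ⟨fun E => Φ.symm ⁻¹' (steiner (Φ ⁻¹' E)), ?_, ?_⟩
  · intro E hE hER
    have hE' := Φ.measurable hE
    have hm : MeasurableSet (Φ.symm ⁻¹' (steiner (Φ ⁻¹' E))) :=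
      Φ.symm.measurable (measurableSet_steiner hE')
    have hfin := volume_fib_lt_top (hsub E hER)
    refine ⟨hm, ?_, ?_, ?_⟩
    · intro x hx
      have : Φ.symm x ∈ Φ ⁻¹' (Metric.closedBall 0 R) := by
        rw [hball R hR]; exact steiner_subset_prodBall (hsub E hER) hx
      simpa using this
    · rw [← hvol _ hm, hpre, volume_steiner hE' hfin, hvol E hE]
    · intro r hr
      have hB : MeasurableSet (Metric.closedBall (0 : Vec (n + 1)) r) :=
        Metric.isClosed_closedBall.measurableSet
      have hD : MeasurableSet {p | p ∈ E \ Metric.closedBall 0 r ∧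
          p + z ∈ Metric.closedBall 0 r \ E} :=
        (hE.diff hB).inter ((measurable_add_const z) (hB.diff hE))
      have h := steiner_gain hE' hfin r t
      rw [← hvol _ (hE.inter hB), ← hvol _ hD, ← hvol _ (hm.inter hB), preimage_inter,
        preimage_inter, hpre, hball r hr]
      refine le_trans (le_of_eq ?_) h
      congr 2
      ext p
      have h1 : Φ (p.1 + t, p.2) = Φ p + z := by
        rw [← ht, ← hadd]; congr 1; ext <;> simp
      rw [← hball r hr]
      simp only [mem_preimage, mem_ofPred_eq, mem_sdiff, h1]
  · intro A B C hA hB hC hAR hBR hCR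
    have hA' := Φ.measurable hA
    have hB' := Φ.measurable hB
    have hC' := Φ.measurable hC
    rw [← htrip A B C hA hB hC, ← htrip _ _ _ (Φ.symm.measurable (measurableSet_steiner hA'))
      (Φ.symm.measurable (measurableSet_steiner hB'))
      (Φ.symm.measurable (measurableSet_steiner hC')), hpre, hpre, hpre]
    exact trip_le_steiner hA' hB' hC' (volume_fib_lt_top (hsub A hAR))
      (volume_fib_lt_top (hsub B hBR)) (volume_fib_lt_top (hsub C hCR))

/-- Averaging over translations: some `z` moves a proportional part of `D` into `D'`. -/
lemma exists_translate {n : ℕ} {R : ℝ} (hR : 0 < R) {D D' : Set (Vec (n + 1))}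
    (hD : MeasurableSet D) (hD' : MeasurableSet D') (hDR : D ⊆ Metric.closedBall 0 R)
    (hDR' : D' ⊆ Metric.closedBall 0 R) :
    ∃ z, volume D * volume D' / volume (Metric.closedBall (0 : Vec (n + 1)) (2 * R)) ≤
      volume {p | p ∈ D ∧ p + z ∈ D'} := by
  set K := Metric.closedBall (0 : Vec (n + 1)) (2 * R) with hK
  have hKm : MeasurableSet K := Metric.isClosed_closedBall.measurableSet
  have h1 : trip D K D' = volume D * volume D' := by
    rw [trip_shear hD hKm hD', ← Measure.prod_prod, Measure.volume_eq_prod]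
    congr 1
    ext ⟨y, x⟩
    simp only [mem_ofPred_eq, mem_prod]
    refine ⟨fun h => ⟨h.1, h.2.2⟩, fun h => ⟨h.1, ?_, h.2⟩⟩
    have hy := mem_closedBall_zero_iff.1 (hDR h.1)
    have hx := mem_closedBall_zero_iff.1 (hDR' h.2)
    rw [hK, mem_closedBall_zero_iff]
    linarith [norm_sub_le x y]
  have h2 : trip D K D' = ∫⁻ z in K, volume {p | p ∈ D ∧ p + z ∈ D'} := by
    unfold trip
    rw [Measure.volume_eq_prod, Measure.prod_apply_symm (measurableSet_trip hD hKm hD'),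
      ← lintegral_indicator hKm]
    refine lintegral_congr fun z => ?_
    by_cases hz : z ∈ K <;> simp [hz]
  have hfin : ∀ E : Set (Vec (n + 1)), E ⊆ Metric.closedBall 0 R → volume E ≠ ⊤ := fun E h =>
    measure_ne_top_of_subset h measure_closedBall_lt_top.ne
  obtain ⟨z, -, hz⟩ := exists_setLAverage_le
    (μ := volume) (s := K) (f := fun z => volume {p | p ∈ D ∧ p + z ∈ D'})
    (Metric.measure_closedBall_pos volume 0 (by positivity)).ne' hKm.nullMeasurableSet
    (by rw [← h2, h1]; exact ENNReal.mul_ne_top (hfin D hDR) (hfin D' hDR'))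
  refine ⟨z, ?_⟩
  rwa [setLAverage_eq, ← h2, h1] at hz


/-! ### Convergence to balls and the Riesz–Sobolev inequality -/

/-- Two sets of equal finite measure have differences of equal measure. -/
lemma volume_diff_comm {n : ℕ} {F B : Set (Vec (n + 1))} (hF : MeasurableSet F)
    (hB : MeasurableSet B) (h : volume F = volume B) (hfin : volume B ≠ ⊤) :
    volume (F \ B) = volume (B \ F) := by
  have h1 := measure_inter_add_sdiff (μ := volume) F hB
  have h2 := measure_inter_add_sdiff (μ := volume) B hF
  rw [h, ← h2, inter_comm B F] at h1
  exact (ENNReal.add_right_inj (measure_ne_top_of_subset inter_subset_right hfin)).1 h1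

/-- Admissible replacements of the triple `E`: measurable triples inside the ball of radius `R`,
with the same measures and at least as large a trilinear form. -/
def Adm {n : ℕ} (R : ℝ) (E F : Fin 3 → Set (Vec (n + 1))) : Prop :=
  (∀ i, MeasurableSet (F i) ∧ F i ⊆ Metric.closedBall 0 R ∧ volume (F i) = volume (E i)) ∧
    trip (E 0) (E 1) (E 2) ≤ trip (F 0) (F 1) (F 2)

/-- A suitable Steiner symmetrization of all three sets decreases the total deficit
`∑ i, volume (B i \ F i)` by an amount that is quadratic in any one of the three deficits. -/
lemma exists_adm_step {n : ℕ} {R : ℝ} (hR : 0 < R) {E F : Fin 3 → Set (Vec (n + 1))}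
    {r : Fin 3 → ℝ} (hr : ∀ i, 0 ≤ r i ∧ r i ≤ R)
    (hEr : ∀ i, volume (Metric.closedBall (0 : Vec (n + 1)) (r i)) = volume (E i))
    (hF : Adm R E F) (i : Fin 3) :
    ∃ F', Adm R E F' ∧
      (∑ j, volume.real (Metric.closedBall 0 (r j) \ F' j)) +
        volume.real (Metric.closedBall 0 (r i) \ F i) ^ 2 /
          volume.real (Metric.closedBall (0 : Vec (n + 1)) (2 * R)) ≤
      ∑ j, volume.real (Metric.closedBall 0 (r j) \ F j) := by
  have hBm : ∀ s, MeasurableSet (Metric.closedBall (0 : Vec (n + 1)) s) := fun s =>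
    Metric.isClosed_closedBall.measurableSet
  have hBfin : ∀ s, volume (Metric.closedBall (0 : Vec (n + 1)) s) ≠ ⊤ := fun s =>
    measure_closedBall_lt_top.ne
  have hdiff := volume_diff_comm (hF.1 i).1 (hBm (r i)) ((hF.1 i).2.2.trans (hEr i).symm)
    (hBfin _)
  obtain ⟨z, hz⟩ := exists_translate hR ((hF.1 i).1.diff (hBm (r i)))
    ((hBm (r i)).diff (hF.1 i).1) (sdiff_subset.trans (hF.1 i).2.1)
    (sdiff_subset.trans (Metric.closedBall_subset_closedBall (hr i).2))
  obtain ⟨σ, hσ, hσt⟩ := exists_symmetrization hR.le z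
  have hσ' := fun j => hσ (F j) (hF.1 j).1 (hF.1 j).2.1
  refine ⟨fun j => σ (F j), ⟨fun j => ⟨(hσ' j).1, (hσ' j).2.1, (hσ' j).2.2.1.trans (hF.1 j).2.2⟩,
    hF.2.trans (hσt _ _ _ (hF.1 0).1 (hF.1 1).1 (hF.1 2).1 (hF.1 0).2.1 (hF.1 1).2.1
      (hF.1 2).2.1)⟩, ?_⟩
  -- The gain of overlap is a loss of deficit.
  have key : ∀ j, volume.real (Metric.closedBall 0 (r j) \ σ (F j)) +
      volume.real {p | p ∈ F j \ Metric.closedBall 0 (r j) ∧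
        p + z ∈ Metric.closedBall 0 (r j) \ F j} ≤
      volume.real (Metric.closedBall 0 (r j) \ F j) := by
    intro j
    have h1 := (hσ' j).2.2.2 (r j) (hr j).1
    have hDf : volume {p | p ∈ F j \ Metric.closedBall 0 (r j) ∧
        p + z ∈ Metric.closedBall 0 (r j) \ F j} ≠ ⊤ :=
      measure_ne_top_of_subset (fun p hp => (hF.1 j).2.1 hp.1.1) (hBfin R)
    have h2 := ENNReal.toReal_mono (measure_ne_top_of_subset inter_subset_right (hBfin _)) h1
    rw [ENNReal.toReal_add (measure_ne_top_of_subset inter_subset_right (hBfin _)) hDf] at h2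
    have h3 := measureReal_inter_add_sdiff (μ := volume) (s := Metric.closedBall 0 (r j))
      (hF.1 j).1 (hBfin _)
    have h4 := measureReal_inter_add_sdiff (μ := volume) (s := Metric.closedBall 0 (r j))
      (hσ' j).1 (hBfin _)
    rw [inter_comm] at h3 h4
    simp only [Measure.real] at *
    linarith
  have hgain : volume.real (Metric.closedBall 0 (r i) \ F i) ^ 2 /
      volume.real (Metric.closedBall (0 : Vec (n + 1)) (2 * R)) ≤
      volume.real {p | p ∈ F i \ Metric.closedBall 0 (r i) ∧
        p + z ∈ Metric.closedBall 0 (r i) \ F i} := by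
    have := ENNReal.toReal_mono
      (measure_ne_top_of_subset (fun p hp => (hF.1 i).2.1 hp.1.1) (hBfin R)) hz
    rw [hdiff, ENNReal.toReal_div, ENNReal.toReal_mul, ← sq] at this
    exact this
  have hrest : ∑ j, volume.real (Metric.closedBall 0 (r j) \ σ (F j)) +
      volume.real {p | p ∈ F i \ Metric.closedBall 0 (r i) ∧
        p + z ∈ Metric.closedBall 0 (r i) \ F i} ≤
      ∑ j, volume.real (Metric.closedBall 0 (r j) \ F j) := by
    refine le_trans ?_ (Finset.sum_le_sum fun j _ => key j)
    rw [Finset.sum_add_distrib]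
    exact add_le_add_right (Finset.single_le_sum (f := fun j => volume.real
      {p | p ∈ F j \ Metric.closedBall 0 (r j) ∧ p + z ∈ Metric.closedBall 0 (r j) \ F j})
      (fun j _ => measureReal_nonneg) (Finset.mem_univ i)) _
  linarith

lemma exists_adm_small {n : ℕ} {R : ℝ} (hR : 0 < R) {E : Fin 3 → Set (Vec (n + 1))}
    {r : Fin 3 → ℝ} (hr : ∀ i, 0 ≤ r i ∧ r i ≤ R)
    (hEr : ∀ i, volume (Metric.closedBall (0 : Vec (n + 1)) (r i)) = volume (E i))
    (hE : ∀ i, MeasurableSet (E i) ∧ E i ⊆ Metric.closedBall 0 R) {ε : ℝ} (hε : 0 < ε) :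
    ∃ F, Adm R E F ∧ ∑ j, volume.real (Metric.closedBall 0 (r j) \ F j) < ε := by
  by_contra! hcon
  set V := volume.real (Metric.closedBall (0 : Vec (n + 1)) (2 * R)) with hV
  have hVpos : 0 < V := ENNReal.toReal_pos
    (Metric.measure_closedBall_pos volume 0 (by positivity)).ne' measure_closedBall_lt_top.ne
  set κ := (ε / 3) ^ 2 / V with hκ
  have hκpos : 0 < κ := by positivity
  have hiter : ∀ k : ℕ, ∃ F, Adm R E F ∧
      ∑ j, volume.real (Metric.closedBall 0 (r j) \ F j) + k * κ ≤
      ∑ j, volume.real (Metric.closedBall 0 (r j) \ E j) := by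
    intro k
    induction k with
    | zero => exact ⟨E, ⟨fun i => ⟨(hE i).1, (hE i).2, rfl⟩, le_rfl⟩, by simp⟩
    | succ k ih =>
      obtain ⟨F, hF, hFk⟩ := ih
      obtain ⟨i, hi⟩ : ∃ i, ε / 3 ≤ volume.real (Metric.closedBall 0 (r i) \ F i) := by
        by_contra! hlt
        have h1 := hcon F hF
        rw [Fin.sum_univ_three] at h1
        linarith [hlt 0, hlt 1, hlt 2]
      obtain ⟨F', hF', hstep⟩ := exists_adm_step hR hr hEr hF i
      refine ⟨F', hF', ?_⟩
      have : κ ≤ volume.real (Metric.closedBall 0 (r i) \ F i) ^ 2 / V := by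
        rw [hκ]; gcongr
      push_cast
      linarith
  obtain ⟨k, hk⟩ := exists_nat_gt ((∑ j, volume.real (Metric.closedBall 0 (r j) \ E j)) / κ)
  obtain ⟨F, -, hF⟩ := hiter k
  rw [div_lt_iff₀ hκpos] at hk
  have : 0 ≤ ∑ j, volume.real (Metric.closedBall 0 (r j) \ F j) :=
    Finset.sum_nonneg fun _ _ => measureReal_nonneg
  linarith

/-- The trilinear form changes little when the sets change little in measure. -/
lemma trip_le_add {n : ℕ} {F B : Fin 3 → Set (Vec (n + 1))} (hF : ∀ i, MeasurableSet (F i))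
    (hB : ∀ i, MeasurableSet (B i)) {M : ℝ≥0∞} (hM : ∀ i, volume (F i) ≤ M) :
    trip (F 0) (F 1) (F 2) ≤ trip (B 0) (B 1) (B 2) + M * ∑ i, volume (F i \ B i) := by
  have h0 : trip (F 0 \ B 0) (F 1) (F 2) ≤ M * volume (F 0 \ B 0) := by
    rw [mul_comm]
    exact (trip_le_left _ _ _).trans (mul_le_mul_right (hM 1) _)
  have h1 : trip (F 0) (F 1 \ B 1) (F 2) ≤ M * volume (F 1 \ B 1) :=
    (trip_le_left _ _ _).trans (mul_le_mul_left (hM 0) _)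
  have h2 : trip (F 0) (F 1) (F 2 \ B 2) ≤ M * volume (F 2 \ B 2) :=
    (trip_le_right (hF 0) (hF 1) ((hF 2).diff (hB 2))).trans (mul_le_mul_left (hM 0) _)
  rw [Fin.sum_univ_three, mul_add, mul_add]
  refine le_trans ?_ (add_le_add_right (add_le_add (add_le_add h0 h1) h2) _)
  refine le_trans ?_ (add_le_add_right (add_le_add_left (measure_union_le _ _) _) _)
  refine le_trans ?_ (add_le_add_right (measure_union_le _ _) _)
  refine le_trans (measure_mono ?_) (measure_union_le _ _)
  rintro p ⟨q0, q1, q2⟩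
  by_cases c0 : p.1 ∈ B 0
  · by_cases c1 : p.2 ∈ B 1
    · by_cases c2 : p.1 + p.2 ∈ B 2
      · exact Or.inl ⟨c0, c1, c2⟩
      · exact Or.inr (Or.inr ⟨q0, q1, q2, c2⟩)
    · exact Or.inr (Or.inl (Or.inr ⟨q0, ⟨q1, c1⟩, q2⟩))
  · exact Or.inr (Or.inl (Or.inl ⟨⟨q0, c0⟩, q1, q2⟩))

lemma riesz_bounded {n : ℕ} {R : ℝ} (hR : 0 < R) {E : Fin 3 → Set (Vec (n + 1))}
    {r : Fin 3 → ℝ} (hr : ∀ i, 0 ≤ r i ∧ r i ≤ R)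
    (hEr : ∀ i, volume (Metric.closedBall (0 : Vec (n + 1)) (r i)) = volume (E i))
    (hE : ∀ i, MeasurableSet (E i) ∧ E i ⊆ Metric.closedBall 0 R) :
    trip (E 0) (E 1) (E 2) ≤ trip (Metric.closedBall (0 : Vec (n + 1)) (r 0)) (Metric.closedBall 0 (r 1))
      (Metric.closedBall 0 (r 2)) := by
  have hBm : ∀ s, MeasurableSet (Metric.closedBall (0 : Vec (n + 1)) s) := fun s =>
    Metric.isClosed_closedBall.measurableSet
  have hBfin : ∀ s, volume (Metric.closedBall (0 : Vec (n + 1)) s) ≠ ⊤ := fun s =>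
    measure_closedBall_lt_top.ne
  set m := volume.real (Metric.closedBall (0 : Vec (n + 1)) R) with hm
  have hm0 : 0 ≤ m := measureReal_nonneg
  refine ENNReal.le_of_forall_pos_le_add fun ε hε _ => ?_
  obtain ⟨F, hF, hFε⟩ := exists_adm_small hR hr hEr hE (ε := ε / (m + 1)) (by positivity)
  refine hF.2.trans ((trip_le_add (B := fun i => Metric.closedBall 0 (r i))
    (fun i => (hF.1 i).1) (fun i => hBm _) (M := ENNReal.ofReal m) fun i => ?_).trans ?_)
  · rw [hm, ofReal_measureReal (hBfin R)]
    exact measure_mono (hF.1 i).2.1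
  · refine add_le_add_right ?_ _
    have h1 : ∀ i, volume (F i \ Metric.closedBall 0 (r i)) =
        ENNReal.ofReal (volume.real (Metric.closedBall 0 (r i) \ F i)) := fun i => by
      rw [volume_diff_comm (hF.1 i).1 (hBm _) ((hF.1 i).2.2.trans (hEr i).symm) (hBfin _),
        ofReal_measureReal (measure_ne_top_of_subset sdiff_subset (hBfin _))]
    simp_rw [h1]
    rw [← ENNReal.ofReal_sum_of_nonneg (fun _ _ => measureReal_nonneg), ← ENNReal.ofReal_mul hm0]
    refine ENNReal.ofReal_le_of_le_toReal ?_
    rw [ENNReal.coe_toReal]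
    rw [lt_div_iff₀ (by positivity)] at hFε
    have : 0 ≤ ∑ j, volume.real (Metric.closedBall 0 (r j) \ F j) :=
      Finset.sum_nonneg fun _ _ => measureReal_nonneg
    linarith


/-- The radius of `ballStar E`. -/
def starRad {d : ℕ} (E : Set (Vec d)) : ℝ :=
  ((volume E).toReal / (volume (Metric.closedBall (0 : Vec d) 1)).toReal) ^ ((1 : ℝ) / d)

lemma ballStar_eq {d : ℕ} (E : Set (Vec d)) : ballStar E = Metric.closedBall 0 (starRad E) := rfl

lemma starRad_nonneg {d : ℕ} (E : Set (Vec d)) : 0 ≤ starRad E :=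
  Real.rpow_nonneg (div_nonneg ENNReal.toReal_nonneg ENNReal.toReal_nonneg) _

lemma measurableSet_ballStar {d : ℕ} (E : Set (Vec d)) : MeasurableSet (ballStar E) :=
  Metric.isClosed_closedBall.measurableSet

lemma starRad_mono {d : ℕ} {E F : Set (Vec d)} (h : E ⊆ F) (hF : volume F ≠ ⊤) :
    starRad E ≤ starRad F := by
  unfold starRad
  have := ENNReal.toReal_mono hF (measure_mono h)
  gcongr

lemma volume_ballStar {n : ℕ} {E : Set (Vec (n + 1))} (hE : volume E ≠ ⊤) :
    volume (ballStar E) = volume E := by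
  have hpos := Metric.measure_closedBall_pos volume (0 : Vec (n + 1)) one_pos
  have hfin : volume (Metric.closedBall (0 : Vec (n + 1)) 1) ≠ ⊤ := measure_closedBall_lt_top.ne
  rw [ballStar_eq, Measure.addHaar_closedBall' _ _ (starRad_nonneg E)]
  have : starRad E ^ Module.finrank ℝ (Vec (n + 1)) =
      (volume E).toReal / (volume (Metric.closedBall (0 : Vec (n + 1)) 1)).toReal := by
    rw [finrank_euclideanSpace_fin, starRad, one_div, Real.rpow_inv_natCast_pow
      (div_nonneg ENNReal.toReal_nonneg ENNReal.toReal_nonneg) (Nat.succ_ne_zero n)]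
  rw [this, ← ENNReal.toReal_div, ENNReal.ofReal_toReal (ENNReal.div_ne_top hE hpos.ne'),
    ENNReal.div_mul_cancel hpos.ne' hfin]

/-- The Riesz–Sobolev inequality for sets of finite measure, by exhaustion with balls. -/
lemma riesz_sobolev {n : ℕ} {A B C : Set (Vec (n + 1))} (hA : MeasurableSet A)
    (hB : MeasurableSet B) (hC : MeasurableSet C) (hA' : volume A ≠ ⊤) (hB' : volume B ≠ ⊤)
    (hC' : volume C ≠ ⊤) :
    trip A B C ≤ trip (ballStar A) (ballStar B) (ballStar C) := by
  set K : ℕ → Set (Vec (n + 1)) := fun k => Metric.closedBall 0 k with hK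
  have hKmono : Monotone K := fun k l h => Metric.closedBall_subset_closedBall (by exact_mod_cast h)
  have hKmem : ∀ x, ∃ k, x ∈ K k := fun x => by
    obtain ⟨k, hk⟩ := exists_nat_ge ‖x‖
    exact ⟨k, mem_closedBall_zero_iff.2 hk⟩
  have hU : {p : Vec (n + 1) × Vec (n + 1) | p.1 ∈ A ∧ p.2 ∈ B ∧ p.1 + p.2 ∈ C} =
      ⋃ k, {p | p.1 ∈ A ∩ K k ∧ p.2 ∈ B ∩ K k ∧ p.1 + p.2 ∈ C ∩ K k} := by
    ext p
    simp only [mem_iUnion, mem_ofPred_eq]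
    constructor
    · rintro ⟨h1, h2, h3⟩
      obtain ⟨k1, hk1⟩ := hKmem p.1
      obtain ⟨k2, hk2⟩ := hKmem p.2
      obtain ⟨k3, hk3⟩ := hKmem (p.1 + p.2)
      exact ⟨max k1 (max k2 k3), ⟨h1, hKmono (by simp) hk1⟩, ⟨h2, hKmono (by simp) hk2⟩,
        h3, hKmono (by simp) hk3⟩
    · rintro ⟨k, h1, h2, h3⟩
      exact ⟨h1.1, h2.1, h3.1⟩
  rw [trip, hU, Monotone.measure_iUnion]
  · refine iSup_le fun k => ?_
    have hKm : MeasurableSet (K k) := Metric.isClosed_closedBall.measurableSet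
    have hstep := riesz_bounded (R := 1 + k + starRad A + starRad B + starRad C)
      (E := ![A ∩ K k, B ∩ K k, C ∩ K k])
      (r := ![starRad (A ∩ K k), starRad (B ∩ K k), starRad (C ∩ K k)])
    have hA0 := starRad_nonneg A
    have hB0 := starRad_nonneg B
    have hC0 := starRad_nonneg C
    have hA1 := starRad_mono (inter_subset_left (s := A) (t := K k)) hA'
    have hB1 := starRad_mono (inter_subset_left (s := B) (t := K k)) hB'
    have hC1 := starRad_mono (inter_subset_left (s := C) (t := K k)) hC'
    have hk0 : (0 : ℝ) ≤ k := Nat.cast_nonneg k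
    have hKR : K k ⊆ Metric.closedBall 0 (1 + k + starRad A + starRad B + starRad C) :=
      Metric.closedBall_subset_closedBall (by linarith)
    refine (hstep (by positivity) ?_ ?_ ?_).trans ?_
    · intro i
      fin_cases i
      · exact ⟨starRad_nonneg _, by simp; linarith⟩
      · exact ⟨starRad_nonneg _, by simp; linarith⟩
      · exact ⟨starRad_nonneg _, by simp; linarith⟩
    · intro i
      fin_cases i
      · exact volume_ballStar (measure_ne_top_of_subset inter_subset_left hA')
      · exact volume_ballStar (measure_ne_top_of_subset inter_subset_left hB')
      · exact volume_ballStar (measure_ne_top_of_subset inter_subset_left hC')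
    · intro i
      fin_cases i
      · exact ⟨hA.inter hKm, inter_subset_right.trans hKR⟩
      · exact ⟨hB.inter hKm, inter_subset_right.trans hKR⟩
      · exact ⟨hC.inter hKm, inter_subset_right.trans hKR⟩
    · exact trip_mono (Metric.closedBall_subset_closedBall hA1)
        (Metric.closedBall_subset_closedBall hB1) (Metric.closedBall_subset_closedBall hC1)
  · intro k l hkl p hp
    exact ⟨⟨hp.1.1, hKmono hkl hp.1.2⟩, ⟨hp.2.1.1, hKmono hkl hp.2.1.2⟩,
      hp.2.2.1, hKmono hkl hp.2.2.2⟩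

/-! ### Truncated convolutions -/

/-- The convolution of two indicator functions, with values in `ℝ≥0∞`. -/
def econv {d : ℕ} (A B : Set (Vec d)) (x : Vec d) : ℝ≥0∞ := volume {y | y ∈ A ∧ x - y ∈ B}

lemma conv_ind {d : ℕ} {A B : Set (Vec d)} (hA : MeasurableSet A) (hB : MeasurableSet B)
    (x : Vec d) : conv (ind A) (ind B) x = (econv A B x).toReal := by
  have hm : MeasurableSet {y | y ∈ A ∧ x - y ∈ B} :=
    hA.inter ((measurable_const.sub measurable_id) hB)
  have h1 : (fun y => ind A y * ind B (x - y)) =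
      {y | y ∈ A ∧ x - y ∈ B}.indicator (1 : Vec d → ℝ) := by
    ext y
    by_cases h1 : y ∈ A <;> by_cases h2 : x - y ∈ B <;> simp [ind, h1, h2]
  rw [conv, h1, integral_indicator_one hm]
  rfl

lemma measurable_econv {d : ℕ} {A B : Set (Vec d)} (hA : MeasurableSet A)
    (hB : MeasurableSet B) : Measurable (econv A B) :=
  measurable_measure_prodMk_right (s := {p : Vec d × Vec d | p.1 ∈ A ∧ p.2 - p.1 ∈ B})
    ((measurable_fst hA).inter ((measurable_snd.sub measurable_fst) hB))

lemma econv_ne_top {d : ℕ} {A B : Set (Vec d)} (hA : volume A ≠ ⊤) (x : Vec d) :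
    econv A B x ≠ ⊤ := measure_ne_top_of_subset (fun _ hy => hy.1) hA

lemma lintegral_econv {d : ℕ} {A B : Set (Vec d)} (hA : MeasurableSet A)
    (hB : MeasurableSet B) : ∫⁻ x, econv A B x = volume A * volume B := by
  rw [← setLIntegral_univ, ← Measure.prod_prod, ← Measure.volume_eq_prod]
  refine (trip_eq_lintegral hA hB MeasurableSet.univ).symm.trans ?_
  unfold trip
  congr 1
  ext p
  simp

lemma integral_min_conv {d : ℕ} {A B : Set (Vec d)} (hA : MeasurableSet A)
    (hB : MeasurableSet B) (hA' : volume A ≠ ⊤) {τ : ℝ} (hτ : 0 < τ) :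
    ∫ x, min (conv (ind A) (ind B) x) τ =
      (∫⁻ x, min (econv A B x) (ENNReal.ofReal τ)).toReal := by
  have h : ∀ x, min (conv (ind A) (ind B) x) τ = (min (econv A B x) (ENNReal.ofReal τ)).toReal :=
    fun x => by
      rw [conv_ind hA hB, ENNReal.toReal_min (econv_ne_top hA' x) ENNReal.ofReal_ne_top,
        ENNReal.toReal_ofReal hτ.le]
  simp_rw [h]
  refine integral_toReal ((measurable_econv hA hB).min measurable_const).aemeasurable ?_
  exact Filter.Eventually.of_forall fun x => (min_le_right _ _).trans_lt ENNReal.ofReal_lt_top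

/-- The truncated convolution inequality in `ℝ≥0∞`: the Riesz–Sobolev inequality is applied with
third set the superlevel set `{econv A B > t}`, on which truncation changes the convolution. -/
lemma lintegral_min_econv_le {n : ℕ} {A B : Set (Vec (n + 1))} (hA : MeasurableSet A)
    (hB : MeasurableSet B) (hA' : volume A ≠ ⊤) (hB' : volume B ≠ ⊤) {t : ℝ≥0∞} (ht : t ≠ 0)
    (ht' : t ≠ ⊤) :
    ∫⁻ x, min (econv (ballStar A) (ballStar B) x) t ≤ ∫⁻ x, min (econv A B x) t := by
  have hg := measurable_econv hA hB
  have hgs := measurable_econv (measurableSet_ballStar A) (measurableSet_ballStar B)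
  have hP : ∫⁻ x, econv A B x ≠ ⊤ := by
    rw [lintegral_econv hA hB]; exact ENNReal.mul_ne_top hA' hB'
  have hPs : ∫⁻ x, econv (ballStar A) (ballStar B) x = ∫⁻ x, econv A B x := by
    rw [lintegral_econv hA hB, lintegral_econv (measurableSet_ballStar A)
      (measurableSet_ballStar B), volume_ballStar hA', volume_ballStar hB']
  set C := {x | t < econv A B x} with hCdef
  have hC : MeasurableSet C := measurableSet_lt measurable_const hg
  have hC' : volume C ≠ ⊤ := by
    refine ne_top_of_le_ne_top (ENNReal.div_ne_top hP ht)
      (le_trans (measure_mono fun x hx => ?_) (meas_ge_le_lintegral_div hg.aemeasurable ht ht'))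
    exact (show t < econv A B x from hx).le
  have hr := riesz_sobolev hA hB hC hA' hB' hC'
  rw [trip_eq_lintegral hA hB hC, trip_eq_lintegral (measurableSet_ballStar A)
    (measurableSet_ballStar B) (measurableSet_ballStar C)] at hr
  change ∫⁻ x in C, econv A B x ≤ ∫⁻ x in ballStar C, econv (ballStar A) (ballStar B) x at hr
  -- On `C` both sides are `t + econv A B x`, off `C` both are `econv A B x`.
  have h1 : (∫⁻ x, min (econv A B x) t) + ∫⁻ x in C, econv A B x =
      (∫⁻ x, econv A B x) + t * volume C := by
    rw [← setLIntegral_const, ← lintegral_indicator hC, ← lintegral_indicator hC,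
      ← lintegral_add_left (hg.min measurable_const), ← lintegral_add_left hg]
    refine lintegral_congr fun x => ?_
    by_cases hx : x ∈ C
    · have : t ≤ econv A B x := (show t < econv A B x from hx).le
      simp [hx, this, add_comm]
    · have : econv A B x ≤ t := not_lt.1 hx
      simp [hx, this]
  have h2 : (∫⁻ x, min (econv (ballStar A) (ballStar B) x) t) +
      (∫⁻ x in ballStar C, econv (ballStar A) (ballStar B) x) ≤
      (∫⁻ x, econv (ballStar A) (ballStar B) x) + t * volume (ballStar C) := by
    rw [← setLIntegral_const, ← lintegral_indicator (measurableSet_ballStar C),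
      ← lintegral_indicator (measurableSet_ballStar C),
      ← lintegral_add_left (hgs.min measurable_const), ← lintegral_add_left hgs]
    refine lintegral_mono fun x => ?_
    by_cases hx : x ∈ ballStar C
    · simp only [hx, indicator_of_mem]
      exact (add_le_add (min_le_right _ _) le_rfl).trans (add_comm _ _).le
    · simp [hx]
  rw [hPs, volume_ballStar hC', ← h1] at h2
  refine (ENNReal.add_le_add_iff_right ?_).1 (h2.trans (add_le_add_right hr _))
  exact ne_top_of_le_ne_top (hPs ▸ hP) (setLIntegral_le_lintegral _ _)

/-- A variant of the Riesz–Sobolev inequality: truncated convolution integrals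
increase under symmetrization. -/
theorem variant_riesz_sobolev (d : ℕ) (hd : 1 ≤ d) (E₁ E₂ : Set (Vec d))
    (h₁ : MeasurableSet E₁) (h₂ : MeasurableSet E₂)
    (hf₁ : volume E₁ ≠ ⊤) (hf₂ : volume E₂ ≠ ⊤) (τ : ℝ) (hτ : 0 < τ) :
    (∫ x, min (conv (ind (ballStar E₁)) (ind (ballStar E₂)) x) τ) ≤
      ∫ x, min (conv (ind E₁) (ind E₂) x) τ := by
  obtain ⟨n, rfl⟩ : ∃ n, d = n + 1 := ⟨d - 1, by omega⟩
  have hs : volume (ballStar E₁) ≠ ⊤ := by rwa [volume_ballStar hf₁]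
  rw [integral_min_conv (measurableSet_ballStar E₁) (measurableSet_ballStar E₂) hs hτ,
    integral_min_conv h₁ h₂ hf₁ hτ]
  refine ENNReal.toReal_mono ?_ (lintegral_min_econv_le h₁ h₂ hf₁ hf₂
    (ENNReal.ofReal_pos.2 hτ).ne' ENNReal.ofReal_ne_top)
  refine ne_top_of_le_ne_top (ENNReal.mul_ne_top hf₁ hf₂) ?_
  rw [← lintegral_econv h₁ h₂]
  exact lintegral_mono fun x => min_le_left _ _
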